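/- Let b>0, d∈ℕ and let (G_n)_{n≥0} be a (b,d)-expander. For any c∈(0,1) there exists a sequence (p_n^*(c))_n of reals, bounded away from zero and one, such that for every ε>0: (i) if (p_n)_n is a sequence with p_n ≥ p_n^*(c)+ε for all n, then μ_{n,p_n}(L_n^{(1)} ≥ c|V_n|) → 1 as n→∞; and (ii) if p_n ≤ p_n^*(c)−ε for all n, then μ_{n,p_n}(L_n^{(1)} ≥ c|V_n|) → 0 as n→∞. -/

import Mathlib

open Filter

noncomputable section

/-- The spanning subgraph of `G` determined by the configuration `x : {0,1}^E`:
an edge of `G` is retained iff its coordinate equals `true`. -/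
def percoGraph {V : Type*} (G : SimpleGraph V) (x : G.edgeSet → Bool) : SimpleGraph V :=
  SimpleGraph.fromEdgeSet {e : Sym2 V | ∃ h : e ∈ G.edgeSet, x ⟨e, h⟩ = true}

/-- The vertex set of the connected component of `v` in the configuration `x`. -/
def percoComp {V : Type*} (G : SimpleGraph V) (x : G.edgeSet → Bool) (v : V) : Set V :=
  {u | (percoGraph G x).Reachable v u}

/-- The number of vertices of the connected component of `v` in the configuration `x`. -/
def compSize {V : Type*} (G : SimpleGraph V) (x : G.edgeSet → Bool) (v : V) : ℕ :=
  (percoComp G x v).ncard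

/-- `L⁽¹⁾`: the number of vertices of the largest connected component of the configuration. -/
def largestComp {V : Type*} (G : SimpleGraph V) (x : G.edgeSet → Bool) : ℕ :=
  sSup (Set.range (compSize G x))

/-- The probability of a single configuration under the product Bernoulli(p) measure. -/
def configProb {E : Type*} (p : ℝ) (x : E → Bool) : ℝ :=
  ∏ᶠ e : E, if x e then p else 1 - p

/-- The product Bernoulli(p) probability of a set of configurations. -/
def probC {E : Type*} (p : ℝ) (A : Set (E → Bool)) : ℝ :=
  ∑ᶠ x ∈ A, configProb p x

/-- Expectation under the product Bernoulli(p) measure. -/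
def expC {E : Type*} (p : ℝ) (f : (E → Bool) → ℝ) : ℝ :=
  ∑ᶠ x : E → Bool, configProb p x * f x

/-- Variance under the product Bernoulli(p) measure. -/
def varC {E : Type*} (p : ℝ) (f : (E → Bool) → ℝ) : ℝ :=
  expC p (fun x => f x ^ 2) - (expC p f) ^ 2

open Classical in
/-- The configuration `x` with coordinate `e` set to `b`. -/
def setEdge {E : Type*} (x : E → Bool) (e : E) (b : Bool) : E → Bool :=
  fun e' => if e' = e then b else x e'

/-- The operator `Δ_{e,p} f (x) = f(x) - ∫ f(x) dx(e)`. -/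
def deltaE {E : Type*} (p : ℝ) (f : (E → Bool) → ℝ) (e : E) (x : E → Bool) : ℝ :=
  f x - (p * f (setEdge x e true) + (1 - p) * f (setEdge x e false))

/-- The norm `‖g‖_{1,p}`. -/
def norm1 {E : Type*} (p : ℝ) (g : (E → Bool) → ℝ) : ℝ :=
  expC p fun x => |g x|

/-- The squared norm `‖g‖_{2,p}²`. -/
def sqNorm2 {E : Type*} (p : ℝ) (g : (E → Bool) → ℝ) : ℝ :=
  expC p fun x => g x ^ 2

/-- `|E(S, Sᶜ)|`: the number of edges of `G` with one endpoint in `S` and the other outside `S`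
(counted via the ordered pair whose first coordinate lies in `S`). -/
def edgeBoundaryCard {V : Type*} (G : SimpleGraph V) (S : Set V) : ℕ :=
  {q : V × V | G.Adj q.1 q.2 ∧ q.1 ∈ S ∧ q.2 ∉ S}.ncard

/-- The maximal degree of `G` is at most `d`. -/
def DegreeLE {V : Type*} (G : SimpleGraph V) (d : ℕ) : Prop :=
  ∀ v, {u | G.Adj v u}.ncard ≤ d

/-- The Cheeger (edge-isoperimetric) constant of `G` is strictly greater than `b`. -/
def CheegerGT {V : Type*} (G : SimpleGraph V) (b : ℝ) : Prop :=
  ∀ S : Set V, 0 < S.ncard → 2 * S.ncard ≤ Nat.card V →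
    b * (S.ncard : ℝ) < (edgeBoundaryCard G S : ℝ)

/-- A `(b,d)`-expander: a sequence of finite graphs with `|V_n| → ∞`, maximal degree at most `d`
and Cheeger constant greater than `b`. -/
structure ExpanderSeq (b : ℝ) (d : ℕ) where
  V : ℕ → Type
  finV : ∀ n, Finite (V n)
  G : ∀ n, SimpleGraph (V n)
  card_tendsto : Tendsto (fun n => Nat.card (V n)) atTop atTop
  degree_le : ∀ n, DegreeLE (G n) d
  cheeger_gt : ∀ n, CheegerGT (G n) b

/-!
Sprinkle twice. First, if the giant event has probability at least `δ`, then with high probability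
some vertex set `C` with `|C| ≥ c |V|` is cut by the open edges into few pieces, in the sense that
it has at most `exp (κ |V|)` saturated subsets: the least logarithm of this number changes by at
most `log 2` when one edge is modified, so it concentrates, and it is at most `log 2` on the giant
event. After a first sprinkling, if no component contained most of `C`, one could split `C` along
old components into two large parts not joined by any sprinkled edge. In an expander, two large
parts are joined by linearly many edge-disjoint paths of bounded length, so a given split survives
with exponentially small probability, and a union bound over the saturated subsets leaves a
component of size `(c - η) |V|`. The second sprinkling opens linearly many boundary edges of that
component, which therefore recovers the missing `η |V|` vertices.
-/

open MeasureTheory ProbabilityTheory unitInterval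

section Variance

variable {α β : Type*} [MeasurableSpace α] [MeasurableSpace β] {μ : Measure α} {ν : Measure β}
  [IsProbabilityMeasure μ] [IsProbabilityMeasure ν]

lemma ae_memLp_two_section {f : α × β → ℝ} (hf : MemLp f 2 (μ.prod ν)) :
    ∀ᵐ x ∂μ, MemLp (fun y => f (x, y)) 2 ν := by
  filter_upwards [hf.integrable_sq.prod_right_ae, hf.1.prodMk_left] with x hsq hmeas
  exact (memLp_two_iff_integrable_sq hmeas).2 hsq

lemma sq_integral_le_integral_sq {f : α → ℝ} (hf : MemLp f 2 μ) :
    (∫ x, f x ∂μ) ^ 2 ≤ ∫ x, f x ^ 2 ∂μ := by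
  have h := variance_nonneg f μ
  rw [variance_eq_sub hf] at h
  exact sub_nonneg.1 h

lemma memLp_two_integral_section {f : α × β → ℝ} (hf : MemLp f 2 (μ.prod ν)) :
    MemLp (fun x => ∫ y, f (x, y) ∂ν) 2 μ := by
  have hmeas : AEStronglyMeasurable (fun x => ∫ y, f (x, y) ∂ν) μ := hf.1.integral_prod_right'
  refine (memLp_two_iff_integrable_sq hmeas).2
    (hf.integrable_sq.integral_prod_left.mono' (hmeas.pow 2) ?_)
  filter_upwards [ae_memLp_two_section hf] with x hx
  simpa only [Real.norm_eq_abs, abs_sq] using sq_integral_le_integral_sq hx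

theorem variance_prod {f : α × β → ℝ} (hf : MemLp f 2 (μ.prod ν)) :
    Var[f; μ.prod ν] =
      ∫ x, Var[fun y => f (x, y); ν] ∂μ + Var[fun x => ∫ y, f (x, y) ∂ν; μ] := by
  have hmean := memLp_two_integral_section hf
  have hsections : ∫ x, Var[fun y => f (x, y); ν] ∂μ =
      ∫ x, ∫ y, f (x, y) ^ 2 ∂ν ∂μ - ∫ x, (∫ y, f (x, y) ∂ν) ^ 2 ∂μ := by
    rw [← integral_sub hf.integrable_sq.integral_prod_left hmean.integrable_sq]
    refine integral_congr_ae ?_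
    filter_upwards [ae_memLp_two_section hf] with x hx
    exact variance_eq_sub hx
  rw [hsections, variance_eq_sub hf, variance_eq_sub hmean,
    integral_prod _ (hf.integrable one_le_two)]
  simp only [Pi.pow_apply]
  rw [integral_prod _ hf.integrable_sq]
  ring

lemma variance_le_sq_of_forall_abs_sub_le {f : α → ℝ} {c : ℝ} (hf : AEMeasurable f μ)
    (hosc : ∀ x y, |f x - f y| ≤ c) : Var[f; μ] ≤ (c / 2) ^ 2 := by
  obtain ⟨x₀⟩ := nonempty_of_isProbabilityMeasure μ
  have hbdd : BddBelow (Set.range f) :=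
    ⟨f x₀ - c, Set.forall_mem_range.2 fun x => by linarith [abs_le.1 (hosc x₀ x)]⟩
  have hrange (x : α) : f x ∈ Set.Icc (⨅ y, f y) ((⨅ y, f y) + c) := by
    have : Nonempty α := ⟨x₀⟩
    refine ⟨ciInf_le hbdd x, ?_⟩
    rw [← sub_le_iff_le_add]
    exact le_ciInf fun y => by linarith [abs_le.1 (hosc x y)]
  simpa using variance_le_sq_of_bounded (.of_forall hrange) hf

lemma variance_prod_le {f : α × β → ℝ} {c v : ℝ} (hf : MemLp f 2 (μ.prod ν))
    (hsection : ∀ x, Integrable (fun y => f (x, y)) ν)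
    (hosc : ∀ x x' y, |f (x, y) - f (x', y)| ≤ c) (hvar : ∀ x, Var[fun y => f (x, y); ν] ≤ v) :
    Var[f; μ.prod ν] ≤ (c / 2) ^ 2 + v := by
  rw [variance_prod hf, add_comm]
  refine add_le_add (variance_le_sq_of_forall_abs_sub_le
    (memLp_two_integral_section hf).1.aemeasurable fun x x' => ?_) ?_
  · rw [← integral_sub (hsection x) (hsection x')]
    simpa using norm_integral_le_of_norm_le_const (μ := ν) (f := fun y => f (x, y) - f (x', y))
      (.of_forall (hosc x x'))
  · simpa using integral_mono_of_nonneg (μ := μ) (.of_forall fun x => variance_nonneg _ _)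
      (integrable_const v) (.of_forall hvar)

end Variance

section BoundedDifferences

open Function

/-- Bounded differences: modifying the single coordinate `i` of the argument changes the
value of `f` by at most `c i`. -/
def HasBoundedDifferences {ι : Type*} [DecidableEq ι] {X : ι → Type*} (f : (∀ i, X i) → ℝ)
    (c : ι → ℝ) : Prop :=
  ∀ x i a, |f (update x i a) - f x| ≤ c i

variable {ι : Type*} [DecidableEq ι] {X : ι → Type*} {f : (∀ i, X i) → ℝ} {c : ι → ℝ}

lemma HasBoundedDifferences.abs_sub_le [Fintype ι] (hf : HasBoundedDifferences f c)
    (x y : ∀ i, X i) : |f x - f y| ≤ ∑ i, c i := by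
  have hpartial (s : Finset ι) : |f (s.piecewise x y) - f y| ≤ ∑ i ∈ s, c i := by
    induction s using Finset.induction_on with
    | empty => simp
    | insert i s hi ih =>
      rw [Finset.piecewise_insert, Finset.sum_insert hi]
      exact (_root_.abs_sub_le _ (f (s.piecewise x y)) _).trans (add_le_add (hf _ _ _) ih)
  simpa using hpartial Finset.univ

lemma HasBoundedDifferences.memLp [Finite ι] [∀ i, MeasurableSpace (X i)]
    {μ : Measure (∀ i, X i)} [IsProbabilityMeasure μ] (hf : HasBoundedDifferences f c)
    (hmeas : Measurable f) : MemLp f 2 μ := by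
  have := Fintype.ofFinite ι
  obtain ⟨x₀⟩ := nonempty_of_isProbabilityMeasure μ
  refine .of_bound hmeas.aestronglyMeasurable (∑ i, c i + |f x₀|) (.of_forall fun x => ?_)
  have h₁ := hf.abs_sub_le x x₀
  have h₂ := abs_sub_abs_le_abs_sub (f x) (f x₀)
  rw [Real.norm_eq_abs]
  linarith

lemma HasBoundedDifferences.variance_le_fin {n : ℕ} {X : Fin n → Type*}
    [∀ i, MeasurableSpace (X i)] (μ : ∀ i, Measure (X i)) [∀ i, IsProbabilityMeasure (μ i)]
    {f : (∀ i, X i) → ℝ} {c : Fin n → ℝ} (hf : HasBoundedDifferences f c) (hmeas : Measurable f) :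
    Var[f; Measure.pi μ] ≤ ∑ i, (c i / 2) ^ 2 := by
  induction n with
  | zero =>
    rw [Finset.univ_eq_empty, Finset.sum_empty, Measure.pi_of_empty, variance_dirac]
  | succ n ih =>
    let e := (MeasurableEquiv.piFinSuccAbove X 0).symm
    have hpres := (measurePreserving_piFinSuccAbove μ 0).symm
    have htail (a : X 0) :
        HasBoundedDifferences (fun y => f (e (a, y))) fun j => c (Fin.succAbove 0 j) := by
      intro y j b
      have h := hf (Fin.insertNth 0 a y) (Fin.succAbove 0 j) b
      rwa [← Fin.insertNth_update] at h
    have hmeas_tail (a : X 0) : Measurable fun y => f (e (a, y)) :=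
      hmeas.comp (e.measurable.comp measurable_prodMk_left)
    rw [← hpres.variance_fun_comp hmeas.aemeasurable, Fin.sum_univ_succAbove _ 0]
    refine variance_prod_le ((hf.memLp hmeas).comp_measurePreserving hpres)
      (fun a => ((htail a).memLp (hmeas_tail a)).integrable one_le_two) (fun a a' y => ?_)
      fun a => ih _ (htail a) (hmeas_tail a)
    have h := hf (Fin.insertNth 0 a' y) 0 a
    rwa [Fin.update_insertNth] at h

theorem HasBoundedDifferences.variance_le [Fintype ι] [∀ i, MeasurableSpace (X i)]
    (μ : ∀ i, Measure (X i)) [∀ i, IsProbabilityMeasure (μ i)]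
    (hf : HasBoundedDifferences f c) (hmeas : Measurable f) :
    Var[f; Measure.pi μ] ≤ ∑ i, (c i / 2) ^ 2 := by
  let e := (Fintype.equivFin ι).symm
  have hpres := measurePreserving_piCongrLeft μ e
  have hupdate (x : ∀ j, X (e j)) (j) (a : X (e j)) :
      MeasurableEquiv.piCongrLeft X e (update x j a) =
        update (MeasurableEquiv.piCongrLeft X e x) (e j) a := by
    ext i
    obtain ⟨k, rfl⟩ := e.surjective i
    rw [MeasurableEquiv.coe_piCongrLeft, Equiv.piCongrLeft_apply_apply]
    rcases eq_or_ne k j with rfl | hkj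
    · rw [update_self, update_self]
    · rw [update_of_ne hkj, update_of_ne (e.injective.ne hkj), Equiv.piCongrLeft_apply_apply]
  rw [← hpres.variance_fun_comp hmeas.aemeasurable, ← e.sum_comp]
  refine HasBoundedDifferences.variance_le_fin _ (fun x j a => ?_)
    (hmeas.comp (MeasurableEquiv.measurable _))
  rw [hupdate]
  exact hf _ _ _

end BoundedDifferences

section BernoulliConfig

open Function

/-- The law of a family of independent bits indexed by `E`, each equal to `true` with
probability `p`: Bernoulli(`p`) percolation when `E` is the edge set of a graph. -/
def bernoulliConfig (E : Type*) (p : I) : Measure (E → Bool) :=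
  Measure.infinitePi fun _ => Ber(true, false, p)

/-- The parameter `1 - (1 - p) (1 - s)` of the union of independent Bernoulli(`p`) and
Bernoulli(`s`) percolations. -/
def sprinkle (p s : I) : I := σ (σ p * σ s)

variable {E : Type*}

instance (p : I) : IsProbabilityMeasure (bernoulliConfig E p) :=
  inferInstanceAs (IsProbabilityMeasure (Measure.infinitePi _))

lemma bernoulliMeasure_real_singleton (p : I) (a : Bool) :
    Ber(true, false, p).real {a} = if a then (p : ℝ) else 1 - p := by
  cases a <;> simp

lemma bernoulliConfig_eq_pi [Fintype E] (p : I) :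
    bernoulliConfig E p = Measure.pi fun _ => Ber(true, false, p) :=
  Measure.infinitePi_eq_pi _

lemma bernoulliConfig_real_singleton [Finite E] (p : I) (x : E → Bool) :
    (bernoulliConfig E p).real {x} = configProb p x := by
  have := Fintype.ofFinite E
  rw [configProb, finprod_eq_prod_of_fintype, bernoulliConfig, measureReal_def,
    Measure.infinitePi_singleton_of_fintype, ENNReal.toReal_prod]
  exact Finset.prod_congr rfl fun e _ => bernoulliMeasure_real_singleton p (x e)

lemma probC_eq_bernoulliConfig_real [Finite E] (p : I) (A : Set (E → Bool)) :
    probC p A = (bernoulliConfig E p).real A := by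
  rw [probC, finsum_mem_eq_finite_toFinset_sum _ A.toFinite]
  simp_rw [← bernoulliConfig_real_singleton]
  rw [sum_measureReal_singleton, Set.Finite.coe_toFinset]

lemma continuous_probC [Finite E] (A : Set (E → Bool)) : Continuous fun p => probC p A := by
  have := Fintype.ofFinite E
  simp_rw [probC, finsum_mem_eq_finite_toFinset_sum _ A.toFinite, configProb,
    finprod_eq_prod_of_fintype]
  refine continuous_finsetSum _ fun x _ => continuous_finsetProd _ fun e _ => ?_
  split_ifs <;> fun_prop

lemma bernoulliConfig_real_eq (p : I) (e : E) (a : Bool) :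
    (bernoulliConfig E p).real {x | x e = a} = if a then (p : ℝ) else 1 - p := by
  rw [← bernoulliMeasure_real_singleton]
  exact (measurePreserving_eval_infinitePi (fun _ => Ber(true, false, p)) e).measureReal_preimage
    (measurableSet_singleton a).nullMeasurableSet

section DisjointBlocks

lemma setOf_forall_true_eq_pi (Z : Finset E) :
    {x : E → Bool | ∀ e ∈ Z, x e = true} = Set.pi Z fun _ => {true} := by
  ext
  simp [Set.mem_pi]

lemma measurableSet_forall_true (Z : Finset E) :
    MeasurableSet {x : E → Bool | ∀ e ∈ Z, x e = true} :=
  setOf_forall_true_eq_pi Z ▸ .pi Z.countable_toSet fun _ _ => .singleton _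

lemma bernoulliConfig_forall_true (p : I) (Z : Finset E) :
    bernoulliConfig E p {x | ∀ e ∈ Z, x e = true} = ENNReal.ofReal p ^ Z.card := by
  rw [setOf_forall_true_eq_pi, bernoulliConfig, Measure.infinitePi_pi _ fun _ _ => .singleton _]
  simp [ENNReal.ofReal, unitInterval.toNNReal, Real.toNNReal_of_nonneg p.2.1, NNReal.mk]

variable {J : Type*} {Z : J → Finset E}

lemma iIndepSet_forall_true (p : I) (hZ : Pairwise fun i j => Disjoint (Z i) (Z j)) :
    iIndepSet (fun j => {x : E → Bool | ∀ e ∈ Z j, x e = true}) (bernoulliConfig E p) := by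
  classical
  refine (iIndepSet_iff_meas_biInter fun j => measurableSet_forall_true _).2 fun s => ?_
  have hunion : ⋂ j ∈ s, {x : E → Bool | ∀ e ∈ Z j, x e = true} =
      {x | ∀ e ∈ s.biUnion Z, x e = true} := by
    ext
    simp only [Set.mem_iInter, Set.mem_ofPred_eq, Finset.mem_biUnion]
    grind
  simp_rw [hunion, bernoulliConfig_forall_true, Finset.card_biUnion fun _ _ _ _ hij => hZ hij,
    Finset.prod_pow_eq_pow_sum]

theorem bernoulliConfig_real_forall_exists_false_le [Fintype J] (p : I) {K : ℕ}
    (hZ : Pairwise fun i j => Disjoint (Z i) (Z j)) (hK : ∀ j, (Z j).card ≤ K) :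
    (bernoulliConfig E p).real {x | ∀ j, ∃ e ∈ Z j, x e = false} ≤
      (1 - (p : ℝ) ^ K) ^ Fintype.card J := by
  let A j := {x : E → Bool | ∀ e ∈ Z j, x e = true}
  have hinter : {x : E → Bool | ∀ j, ∃ e ∈ Z j, x e = false} = ⋂ j, (A j)ᶜ := by
    ext
    simp [A]
  have hindep : iIndep (fun j => MeasurableSpace.generateFrom {A j}) (bernoulliConfig E p) :=
    (iIndepSet_iff_iIndep _ _).1 (iIndepSet_forall_true p hZ)
  rw [hinter, measureReal_def, hindep.meas_iInter fun j =>
    (MeasurableSpace.measurableSet_generateFrom (Set.mem_singleton (A j))).compl,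
    ENNReal.toReal_prod]
  refine (Finset.prod_le_prod (fun _ _ => ENNReal.toReal_nonneg) fun j _ => ?_).trans_eq
    (Finset.prod_const _)
  rw [← measureReal_def, probReal_compl_eq_one_sub (measurableSet_forall_true _), measureReal_def,
    bernoulliConfig_forall_true, ENNReal.toReal_pow, ENNReal.toReal_ofReal p.2.1]
  exact sub_le_sub_left (pow_le_pow_of_le_one p.2.1 p.2.2 (hK j)) 1

end DisjointBlocks

section Sprinkling

lemma measureReal_prod_le_add {α β : Type*} [MeasurableSpace α] [MeasurableSpace β]
    {μ : Measure α} {ν : Measure β} [IsProbabilityMeasure μ] [IsProbabilityMeasure ν]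
    {S : Set (α × β)} {T : Set α} {ε : ℝ} (hS : MeasurableSet S) (hT : MeasurableSet T)
    (hε : 0 ≤ ε) (h : ∀ x ∉ T, ν.real (Prod.mk x ⁻¹' S) ≤ ε) :
    (μ.prod ν).real S ≤ μ.real T + ε := by
  have hslice (x : α) : ν (Prod.mk x ⁻¹' S) ≤ T.indicator 1 x + ENNReal.ofReal ε := by
    by_cases hx : x ∈ T
    · simpa [hx] using prob_le_one.trans le_self_add
    · simpa [hx] using (ENNReal.le_ofReal_iff_toReal_le (measure_ne_top _ _) hε).2 (h x hx)
  have hprod : (μ.prod ν) S ≤ μ T + ENNReal.ofReal ε := by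
    rw [Measure.prod_apply hS]
    refine (lintegral_mono hslice).trans_eq ?_
    rw [lintegral_add_right _ measurable_const, lintegral_indicator_one hT, lintegral_const,
      measure_univ, mul_one]
  refine (ENNReal.toReal_mono (by finiteness) hprod).trans_eq ?_
  rw [ENNReal.toReal_add (by finiteness) (by finiteness), ENNReal.toReal_ofReal hε, measureReal_def]

lemma coe_sprinkle (p s : I) : (sprinkle p s : ℝ) = 1 - (1 - p) * (1 - s) := rfl

lemma coe_sprinkle_le_add (p s : I) : (sprinkle p s : ℝ) ≤ p + s := by
  rw [coe_sprinkle]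
  linarith [mul_nonneg p.2.1 s.2.1]

lemma map_sup_bernoulliMeasure (p s : I) :
    (Ber(true, false, p).prod Ber(true, false, s)).map (fun z => z.1 ⊔ z.2) =
      Ber(true, false, sprinkle p s) := by
  have hfalse : (fun z : Bool × Bool => z.1 ⊔ z.2) ⁻¹' {false} = {false} ×ˢ {false} := by
    ext ⟨a, b⟩
    simp
  have htrue : (fun z : Bool × Bool => z.1 ⊔ z.2) ⁻¹' {true} = ({false} ×ˢ {false})ᶜ := by
    rw [← hfalse, ← Set.preimage_compl]
    congr
    ext a
    simp
  refine Measure.ext_of_singleton fun a => ?_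
  rw [Measure.map_apply (measurable_of_finite _) (.singleton a), ← measureReal_eq_measureReal_iff]
  cases a
  · rw [hfalse, measureReal_prod_prod]
    simp [coe_sprinkle]
  · rw [htrue, probReal_compl_eq_one_sub .of_discrete, measureReal_prod_prod]
    simp [coe_sprinkle]

variable [Finite E]

lemma measurePreserving_sup (p s : I) :
    MeasurePreserving (fun z : (E → Bool) × (E → Bool) => z.1 ⊔ z.2)
      ((bernoulliConfig E p).prod (bernoulliConfig E s)) (bernoulliConfig E (sprinkle p s)) := by
  have := Fintype.ofFinite E
  simp_rw [bernoulliConfig_eq_pi]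
  have hbits : MeasurePreserving (fun z : Bool × Bool => z.1 ⊔ z.2)
      (Ber(true, false, p).prod Ber(true, false, s)) Ber(true, false, sprinkle p s) :=
    ⟨.of_discrete, map_sup_bernoulliMeasure p s⟩
  exact (measurePreserving_pi _ _ fun _ : E => hbits).comp
    (measurePreserving_arrowProdEquivProdArrow Bool Bool E _ _).symm

theorem bernoulliConfig_sprinkle_real_le (p s : I) {B T : Set (E → Bool)} {ε : ℝ} (hε : 0 ≤ ε)
    (h : ∀ x ∉ T, (bernoulliConfig E s).real {y | x ⊔ y ∈ B} ≤ ε) :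
    (bernoulliConfig E (sprinkle p s)).real B ≤ (bernoulliConfig E p).real T + ε := by
  rw [← (measurePreserving_sup p s).measureReal_preimage
    (MeasurableSet.of_discrete).nullMeasurableSet]
  exact measureReal_prod_le_add .of_discrete .of_discrete hε h

lemma exists_sprinkle_eq {p q : I} (hpq : p ≤ q) : ∃ s, sprinkle p s = q := by
  have hpq' : (p : ℝ) ≤ q := hpq
  rcases p.2.2.eq_or_lt with hp | hp
  · exact ⟨0, Subtype.ext (by rw [coe_sprinkle, hp]; linarith [q.2.2])⟩
  · have hp' : 0 < 1 - (p : ℝ) := sub_pos.2 hp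
    refine ⟨⟨(q - p) / (1 - p), div_nonneg (sub_nonneg.2 hpq) hp'.le,
      (div_le_one hp').2 (sub_le_sub_right q.2.2 _)⟩, Subtype.ext ?_⟩
    rw [coe_sprinkle]
    field_simp
    ring

theorem bernoulliConfig_real_mono {p q : I} (hpq : p ≤ q) {B : Set (E → Bool)}
    (hB : IsUpperSet B) : (bernoulliConfig E p).real B ≤ (bernoulliConfig E q).real B := by
  obtain ⟨s, rfl⟩ := exists_sprinkle_eq hpq
  rw [← (measurePreserving_sup p s).measureReal_preimage
    (MeasurableSet.of_discrete).nullMeasurableSet]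
  calc (bernoulliConfig E p).real B
      = ((bernoulliConfig E p).prod (bernoulliConfig E s)).real (B ×ˢ Set.univ) := by
        simp [measureReal_prod_prod]
    _ ≤ _ := measureReal_mono fun z hz => hB le_sup_left hz.1

end Sprinkling

section Concentration

variable [Finite E]

lemma integral_ncard_setOf_eq (p : I) (F : Set E) (a : Bool) :
    ∫ x, ({e ∈ F | x e = a}.ncard : ℝ) ∂bernoulliConfig E p =
      (if a then (p : ℝ) else 1 - p) * F.ncard := by
  have := Fintype.ofFinite E
  classical
  have hsum (x : E → Bool) : ({e ∈ F | x e = a}.ncard : ℝ) =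
      ∑ e ∈ F.toFinset, {y : E → Bool | y e = a}.indicator 1 x := by
    have hfilter : {e ∈ F | x e = a} = ↑(F.toFinset.filter fun e => x e = a) := by
      ext
      simp
    rw [hfilter, Set.ncard_coe_finset, Finset.card_filter, Nat.cast_sum]
    exact Finset.sum_congr rfl fun e _ => by simp [Set.indicator_apply]
  simp_rw [hsum]
  rw [integral_finsetSum _ fun e _ => .of_finite]
  simp_rw [integral_indicator_one (MeasurableSet.of_discrete), bernoulliConfig_real_eq]
  rw [Finset.sum_const, Set.ncard_eq_toFinset_card', nsmul_eq_mul, mul_comm]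

theorem mul_bernoulliConfig_real_le (p : I) (a : Bool) {A : Set (E → Bool)} {l : ℝ}
    (hl : 0 ≤ l) (hA : ∀ x ∈ A, l ≤ {e | x e = a}.ncard) :
    l * (bernoulliConfig E p).real A ≤ (if a then (p : ℝ) else 1 - p) * Nat.card E := by
  have hmarkov := mul_meas_ge_le_integral_of_nonneg (μ := bernoulliConfig E p)
    (f := fun x => ({e ∈ Set.univ | x e = a}.ncard : ℝ)) (.of_forall fun _ => Nat.cast_nonneg _)
    .of_finite l
  rw [integral_ncard_setOf_eq, Set.ncard_univ] at hmarkov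
  refine (mul_le_mul_of_nonneg_left (measureReal_mono fun x hx => ?_) hl).trans hmarkov
  simpa using hA x hx

lemma hasBoundedDifferences_ncard_setOf_eq [DecidableEq E] (F : Set E) (a : Bool) :
    HasBoundedDifferences (fun x : E → Bool => ({e ∈ F | x e = a}.ncard : ℝ)) 1 := by
  have hone {x y : E → Bool} {i : E} (h : ∀ e ≠ i, x e = y e) :
      {e ∈ F | x e = a}.ncard ≤ {e ∈ F | y e = a}.ncard + 1 := by
    refine (Set.ncard_le_ncard fun e he => ?_).trans (Set.ncard_insert_le i _)
    grind
  intro x i b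
  have h₁ := hone fun e (he : e ≠ i) => update_of_ne he b x
  have h₂ := hone fun e (he : e ≠ i) => (update_of_ne he b x).symm
  rify at h₁ h₂
  exact abs_sub_le_iff.2 ⟨sub_le_iff_le_add'.2 h₁, sub_le_iff_le_add'.2 h₂⟩

theorem HasBoundedDifferences.sq_mul_bernoulliConfig_real_le [DecidableEq E] (p : I)
    {f : (E → Bool) → ℝ} (hf : HasBoundedDifferences f 1) {A : Set (E → Bool)} {l : ℝ}
    (hl : 0 < l) (hA : ∀ x ∈ A, l ≤ |f x - ∫ y, f y ∂bernoulliConfig E p|) :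
    l ^ 2 * (bernoulliConfig E p).real A ≤ Nat.card E / 4 := by
  have := Fintype.ofFinite E
  have hvar : Var[f; bernoulliConfig E p] ≤ Nat.card E / 4 := by
    rw [bernoulliConfig_eq_pi]
    refine (hf.variance_le _ .of_discrete).trans_eq ?_
    simp only [Pi.one_apply, Finset.sum_const, Finset.card_univ, nsmul_eq_mul,
      Nat.card_eq_fintype_card]
    ring
  have hcheb := measure_mono (μ := bernoulliConfig E p) hA |>.trans
    (meas_ge_le_variance_div_sq .of_discrete hl)
  have hreal := ENNReal.toReal_le_of_le_ofReal
    (div_nonneg (variance_nonneg f (bernoulliConfig E p)) (sq_nonneg l)) hcheb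
  rw [le_div_iff₀' (by positivity)] at hreal
  exact hreal.trans hvar

end Concentration

end BernoulliConfig

section SaturatedSubsets

open scoped symmDiff

variable {V : Type*} {H H' : SimpleGraph V} {C S T : Set V}

/-- The subsets of `C` that are unions of connected components of the subgraph of `H` induced
on `C`. If that subgraph has `k` components then there are `2 ^ k` of them. -/
def saturatedSubsets (H : SimpleGraph V) (C : Set V) : Set (Set V) :=
  {S | S ⊆ C ∧ ∀ ⦃u v⦄, u ∈ C → v ∈ C → H.Adj u v → (u ∈ S ↔ v ∈ S)}

lemma saturatedSubsets_anti (hHH' : H ≤ H') (C : Set V) :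
    saturatedSubsets H' C ⊆ saturatedSubsets H C :=
  fun _ hS => ⟨hS.1, fun _ _ hu hv huv => hS.2 hu hv (hHH' huv)⟩

lemma inter_mem_saturatedSubsets (hT : T ∈ saturatedSubsets H Set.univ) (C : Set V) :
    T ∩ C ∈ saturatedSubsets H C :=
  ⟨Set.inter_subset_right, fun u v hu hv huv => by
    simpa [hu, hv] using hT.2 (Set.mem_univ u) (Set.mem_univ v) huv⟩

lemma sdiff_mem_saturatedSubsets (hS : S ∈ saturatedSubsets H C)
    (hT : T ∈ saturatedSubsets H C) : S \ T ∈ saturatedSubsets H C :=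
  ⟨Set.sdiff_subset.trans hS.1, fun _ _ hu hv huv =>
    and_congr (hS.2 hu hv huv) (not_congr (hT.2 hu hv huv))⟩

lemma symmDiff_mem_saturatedSubsets (hS : S ∈ saturatedSubsets H C)
    (hT : T ∈ saturatedSubsets H C) : S ∆ T ∈ saturatedSubsets H C :=
  ⟨Set.union_subset (Set.sdiff_subset.trans hS.1) (Set.sdiff_subset.trans hT.1),
    fun _ _ hu hv huv => by
      rw [Set.mem_symmDiff, Set.mem_symmDiff, hS.2 hu hv huv, hT.2 hu hv huv]⟩

lemma supp_mem_saturatedSubsets (D : H.ConnectedComponent) :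
    D.supp ∈ saturatedSubsets H Set.univ :=
  ⟨Set.subset_univ _, fun _ _ _ _ huv => D.mem_supp_congr_adj huv⟩

lemma one_le_ncard_saturatedSubsets [Finite V] (H : SimpleGraph V) (C : Set V) :
    1 ≤ (saturatedSubsets H C).ncard :=
  (Set.ncard_pos).2 ⟨∅, Set.empty_subset _, fun _ _ _ _ _ => Iff.rfl⟩

theorem ncard_saturatedSubsets_le_two_mul [Finite V] {a b : V} (h : H' ≤ H ⊔ SimpleGraph.edge a b)
    (C : Set V) : (saturatedSubsets H C).ncard ≤ 2 * (saturatedSubsets H' C).ncard := by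
  have hmem {S} (hS : S ∈ saturatedSubsets H C) (hab : a ∈ C → b ∈ C → (a ∈ S ↔ b ∈ S)) :
      S ∈ saturatedSubsets H' C := by
    refine ⟨hS.1, fun u v hu hv huv => ?_⟩
    rcases h huv with hH | hedge
    · exact hS.2 hu hv hH
    · rcases (SimpleGraph.edge_adj ..).1 hedge with ⟨⟨rfl, rfl⟩ | ⟨rfl, rfl⟩, -⟩
      · exact hab hu hv
      · exact (hab hv hu).symm
  by_cases hsub : saturatedSubsets H C ⊆ saturatedSubsets H' C
  · have := Set.ncard_le_ncard hsub
    lia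
  obtain ⟨S₀, hS₀, hS₀'⟩ := Set.not_subset.1 hsub
  have hS₀ab : a ∈ C ∧ b ∈ C ∧ ¬(a ∈ S₀ ↔ b ∈ S₀) := by
    by_contra hab
    exact hS₀' (hmem hS₀ (by tauto))
  have hcover : saturatedSubsets H C ⊆
      saturatedSubsets H' C ∪ (· ∆ S₀) '' saturatedSubsets H' C := by
    intro S hS
    refine or_iff_not_imp_left.2 fun hS' => ⟨S ∆ S₀, ?_, symmDiff_symmDiff_cancel_right _ _⟩
    refine hmem (symmDiff_mem_saturatedSubsets hS hS₀) fun _ _ => ?_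
    have hSab : ¬(a ∈ S ↔ b ∈ S) := fun hab => hS' (hmem hS fun _ _ => hab)
    rw [Set.mem_symmDiff, Set.mem_symmDiff]
    tauto
  calc (saturatedSubsets H C).ncard
      ≤ (saturatedSubsets H' C).ncard + ((· ∆ S₀) '' saturatedSubsets H' C).ncard :=
        (Set.ncard_le_ncard hcover).trans (Set.ncard_union_le _ _)
    _ ≤ 2 * (saturatedSubsets H' C).ncard := by
        rw [two_mul]
        exact Nat.add_le_add_left (Set.ncard_image_le) _

lemma ncard_saturatedSubsets_supp_le [Finite V] (D : H.ConnectedComponent) :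
    (saturatedSubsets H D.supp).ncard ≤ 2 := by
  have hsub : saturatedSubsets H D.supp ⊆ {∅, D.supp} := by
    intro S hS
    refine or_iff_not_imp_left.2 fun hne => hS.1.antisymm fun v hv => ?_
    obtain ⟨u, hu⟩ := Set.nonempty_iff_ne_empty.2 hne
    obtain ⟨w⟩ := D.reachable_of_mem_supp (hS.1 hu) hv
    clear hv
    induction w with
    | nil => exact hu
    | cons huv _ ih =>
      have hv := (D.mem_supp_congr_adj huv).1 (hS.1 hu)
      exact ih ((hS.2 (hS.1 hu) hv huv).1 hu)
  exact (Set.ncard_le_ncard hsub).trans <|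
    (Set.ncard_insert_le _ _).trans_eq (by rw [Set.ncard_singleton])

theorem exists_balanced_saturatedSubset [Finite V] {t : ℝ} (ht : 0 < t) (hC : 3 * t ≤ C.ncard)
    (h : ∀ D : H.ConnectedComponent, ((D.supp ∩ C).ncard : ℝ) < C.ncard - t) :
    ∃ T ∈ saturatedSubsets H Set.univ, t ≤ (T ∩ C).ncard ∧ t ≤ (C \ T).ncard := by
  obtain ⟨T, ⟨hT, htT⟩, hmin⟩ := Set.exists_min_image
    {T | T ∈ saturatedSubsets H Set.univ ∧ t ≤ (T ∩ C).ncard} (fun T => (T ∩ C).ncard)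
    (Set.toFinite _) ⟨Set.univ, ⟨subset_rfl, by simp⟩, by rw [Set.univ_inter]; linarith⟩
  refine ⟨T, hT, htT, ?_⟩
  have hpos : 0 < (T ∩ C).ncard := by exact_mod_cast ht.trans_le htT
  obtain ⟨v, hv⟩ := (Set.ncard_pos).1 hpos
  let D := H.connectedComponentMk v
  have hrest : ((T \ D.supp ∩ C).ncard : ℝ) < t := by
    by_contra! hge
    refine (hmin _ ⟨sdiff_mem_saturatedSubsets hT (supp_mem_saturatedSubsets D), hge⟩).not_gt ?_
    refine Set.ncard_lt_ncard ⟨by grind, fun hsub => ?_⟩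
    exact (hsub hv).1.2 rfl
  have hsplit : (C.ncard : ℝ) = (T ∩ C).ncard + (C \ T).ncard := by
    rw [Set.inter_comm]
    exact_mod_cast (Set.ncard_inter_add_ncard_sdiff_eq_ncard C T).symm
  suffices ((T ∩ C).ncard : ℝ) ≤ C.ncard - t by linarith
  rcases le_or_gt t (D.supp ∩ C).ncard with hD | hD
  · have hle : ((T ∩ C).ncard : ℝ) ≤ (D.supp ∩ C).ncard := by
      exact_mod_cast hmin _ ⟨supp_mem_saturatedSubsets D, hD⟩
    exact hle.trans (h D).le
  · have hle : (T ∩ C).ncard ≤ (T \ D.supp ∩ C).ncard + (D.supp ∩ C).ncard :=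
      (Set.ncard_le_ncard (by grind)).trans (Set.ncard_union_le _ _)
    rify at hle
    linarith

end SaturatedSubsets

section Expanders

variable {V : Type*} {G : SimpleGraph V} {S S' : Set V} {b t : ℝ} {d K : ℕ}

/-- The edges of `G` leaving the vertex set `S`. -/
def cutEdges (G : SimpleGraph V) (S : Set V) : Set G.edgeSet :=
  {e | ∃ u ∈ S, ∃ v ∉ S, e.1 = s(u, v)}

/-- The edge set `Z` contains a path from `S` to `S'`. This is encoded by duality: every cut
separating `S` from `S'` contains an edge of `Z`. -/
def Connects (Z : Finset G.edgeSet) (S S' : Set V) : Prop :=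
  ∀ T, S ⊆ T → Disjoint T S' → ∃ e ∈ Z, e ∈ cutEdges G T

lemma cutEdges_compl (G : SimpleGraph V) (S : Set V) : cutEdges G Sᶜ = cutEdges G S := by
  ext e
  constructor <;> rintro ⟨u, hu, v, hv, he⟩ <;>
    exact ⟨v, by simpa using hv, u, by simpa using hu, he.trans Sym2.eq_swap⟩

lemma edgeBoundaryCard_le_ncard_cutEdges [Finite V] (G : SimpleGraph V) (S : Set V) :
    edgeBoundaryCard G S ≤ (cutEdges G S).ncard := by
  rw [← Set.ncard_image_of_injective (cutEdges G S) Subtype.val_injective]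
  refine Set.ncard_le_ncard_of_injOn (fun q => s(q.1, q.2))
    (fun q hq => ⟨⟨_, hq.1⟩, ⟨q.1, hq.2.1, q.2, hq.2.2, rfl⟩, rfl⟩) ?_
  rintro ⟨u, v⟩ ⟨-, hu, -⟩ ⟨u', v'⟩ ⟨-, -, hv'⟩ heq
  rcases Sym2.eq_iff.1 heq with ⟨rfl, rfl⟩ | ⟨rfl, rfl⟩
  · rfl
  · exact absurd hu hv'

theorem CheegerGT.mul_le_ncard_cutEdges [Finite V] (hG : CheegerGT G b) (hb : 0 ≤ b)
    (ht : 0 < t) (hS : t ≤ S.ncard) (hSc : t ≤ Sᶜ.ncard) : b * t ≤ (cutEdges G S).ncard := by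
  wlog hhalf : 2 * S.ncard ≤ Nat.card V generalizing S
  · rw [← cutEdges_compl]
    refine this hSc (by rwa [compl_compl]) ?_
    have := Set.ncard_add_ncard_compl S
    lia
  have hpos : 0 < S.ncard := by exact_mod_cast ht.trans_le hS
  calc b * t ≤ b * S.ncard := by gcongr
    _ ≤ edgeBoundaryCard G S := (hG S hpos hhalf).le
    _ ≤ (cutEdges G S).ncard := by exact_mod_cast edgeBoundaryCard_le_ncard_cutEdges G S

lemma DegreeLE.ncard_le_mul [Finite V] (hG : DegreeLE G d) {F : Set G.edgeSet} {O : Set V}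
    (hF : ∀ e ∈ F, ∃ v ∈ O, v ∈ e.1) : F.ncard ≤ d * O.ncard := by
  classical
  have := Fintype.ofFinite V
  have hcover : Subtype.val '' F ⊆
      (O.toFinset.biUnion fun v => {u | G.Adj v u}.toFinset.image fun u => s(v, u) :
        Finset (Sym2 V)) := by
    rintro _ ⟨⟨e, he⟩, heF, rfl⟩
    obtain ⟨v, hv, u, rfl⟩ := hF _ heF
    simp only [Finset.coe_biUnion, Set.mem_iUnion]
    exact ⟨v, by simpa using hv, Finset.mem_image_of_mem _ (by simpa using he)⟩
  rw [← Set.ncard_image_of_injective F Subtype.val_injective]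
  refine (Set.ncard_le_ncard hcover).trans ?_
  rw [Set.ncard_coe_finset, mul_comm, Set.ncard_eq_toFinset_card']
  refine Finset.card_biUnion_le_card_mul _ _ _ fun v _ => Finset.card_image_le.trans ?_
  rw [← Set.ncard_eq_toFinset_card']
  exact hG v

lemma DegreeLE.card_edgeSet_le [Finite V] (hG : DegreeLE G d) :
    Nat.card G.edgeSet ≤ d * Nat.card V := by
  rw [← Set.ncard_univ, ← Set.ncard_univ]
  exact hG.ncard_le_mul fun e _ => ⟨_, Set.mem_univ _, e.1.out_fst_mem⟩

-- The ball of radius `k` about `S` gains at least `a / d` vertices with each unit of `k`.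
lemma exists_walk_length_le [Finite V] {H : SimpleGraph V} {a : ℝ}
    (hgrow : ∀ T, S ⊆ T → Disjoint T S' → a ≤ d * {v | v ∉ T ∧ ∃ u ∈ T, H.Adj u v}.ncard)
    (hK : d * Nat.card V < K * a) : ∃ u ∈ S, ∃ v ∈ S', ∃ w : H.Walk u v, w.length ≤ K := by
  by_contra! hno
  let ball (k : ℕ) : Set V := {v | ∃ u ∈ S, ∃ w : H.Walk u v, w.length ≤ k}
  have hball (k : ℕ) (hk : k ≤ K) : k * a ≤ d * (ball k).ncard := by
    induction k with
    | zero =>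
      rw [Nat.cast_zero, zero_mul]
      positivity
    | succ k ih =>
      have hstep := hgrow (ball k) (fun v hv => ⟨v, hv, .nil, Nat.zero_le k⟩)
        (Set.disjoint_left.2 fun v ⟨u, hu, w, hw⟩ hv => by
          have := hno u hu v hv w
          lia)
      have hunion : (ball k).ncard + {v | v ∉ ball k ∧ ∃ u ∈ ball k, H.Adj u v}.ncard ≤
          (ball (k + 1)).ncard := by
        rw [← Set.ncard_union_eq (Set.disjoint_left.2 fun v hv hv' => hv'.1 hv)]
        refine Set.ncard_le_ncard ?_
        rintro v (⟨u, hu, w, hw⟩ | ⟨-, v', ⟨u, hu, w, hw⟩, hadj⟩)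
        · exact ⟨u, hu, w, hw.trans k.le_succ⟩
        · exact ⟨u, hu, w.concat hadj, by rw [SimpleGraph.Walk.length_concat]; lia⟩
      rify at hunion
      have hmul := mul_le_mul_of_nonneg_left hunion (Nat.cast_nonneg (α := ℝ) d)
      push_cast
      linarith [ih (by lia)]
  have hcard : ((ball K).ncard : ℝ) ≤ Nat.card V := by exact_mod_cast Set.ncard_le_card _
  have hmul := mul_le_mul_of_nonneg_left hcard (Nat.cast_nonneg (α := ℝ) d)
  linarith [hball K le_rfl]

lemma connects_of_walk {u v : V} (w : G.Walk u v) (hu : u ∈ S) (hv : v ∈ S')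
    {Z : Finset G.edgeSet} (hZ : ∀ e : G.edgeSet, e.1 ∈ w.edges → e ∈ Z) : Connects Z S S' := by
  intro T hST hTS'
  obtain ⟨e, he, hfst, hsnd⟩ := w.exists_boundary_dart T (hST hu)
    fun hvT => hTS'.le_bot ⟨hvT, hv⟩
  exact ⟨⟨e.edge, e.edge_mem⟩, hZ _ (List.mem_map_of_mem he), e.fst, hfst, e.snd, hsnd, rfl⟩

lemma CheegerGT.exists_connects [Finite V] (hG : CheegerGT G b) (hdeg : DegreeLE G d)
    (hb : 0 ≤ b) (ht : 0 < t) (hS : t ≤ S.ncard) (hS' : t ≤ S'.ncard)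
    (hK : d * Nat.card V < K * (b * t / 2)) {U : Set G.edgeSet} (hU : U.ncard ≤ b * t / 2) :
    ∃ Z : Finset G.edgeSet, Z.card ≤ K ∧ Connects Z S S' ∧ Disjoint (Z : Set G.edgeSet) U := by
  classical
  let H := G.deleteEdges (Subtype.val '' U)
  obtain ⟨u, hu, v, hv, w, hw⟩ : ∃ u ∈ S, ∃ v ∈ S', ∃ w : H.Walk u v, w.length ≤ K := by
    refine exists_walk_length_le (fun T hST hTS' => ?_) hK
    have hcut : b * t ≤ (cutEdges G T).ncard := hG.mul_le_ncard_cutEdges hb ht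
      (hS.trans (by exact_mod_cast Set.ncard_le_ncard hST))
      (hS'.trans (by exact_mod_cast Set.ncard_le_ncard hTS'.subset_compl_left))
    have hsdiff : (cutEdges G T).ncard ≤ (cutEdges G T \ U).ncard + U.ncard :=
      Set.ncard_le_ncard_sdiff_add_ncard _ _
    have hmeet : (cutEdges G T \ U).ncard ≤ d * {v | v ∉ T ∧ ∃ u ∈ T, H.Adj u v}.ncard := by
      refine hdeg.ncard_le_mul ?_
      rintro ⟨e, he⟩ ⟨⟨u, hu, v, hv, rfl⟩, heU⟩
      exact ⟨v, ⟨hv, u, hu, (SimpleGraph.deleteEdges_adj).2 ⟨he, by simpa using fun _ => heU⟩⟩,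
        Sym2.mem_mk_right u v⟩
    rify at hsdiff hmeet
    linarith
  have hsub : H ≤ G := G.deleteEdges_le _
  refine ⟨w.edges.toFinset.subtype (· ∈ G.edgeSet), ?_,
    connects_of_walk (w.mapLe hsub) hu hv fun e he => by simpa using he, ?_⟩
  · calc _ ≤ w.edges.toFinset.card := by
          rw [Finset.card_subtype]
          exact Finset.card_filter_le _ _
      _ ≤ w.length := (List.toFinset_card_le _).trans_eq w.length_edges
      _ ≤ K := hw
  · refine Set.disjoint_left.2 fun e he heU => ?_
    have hew : e.1 ∈ w.edges := by simpa using he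
    have heH := w.edges_subset_edgeSet hew
    rw [SimpleGraph.edgeSet_deleteEdges] at heH
    exact heH.2 ⟨e, heU, rfl⟩

theorem CheegerGT.exists_pairwise_disjoint_connects [Finite V] (hG : CheegerGT G b)
    (hdeg : DegreeLE G d) (hb : 0 ≤ b) (ht : 0 < t) (hS : t ≤ S.ncard) (hS' : t ≤ S'.ncard)
    (hK : d * Nat.card V < K * (b * t / 2)) {m : ℕ} (hm : m * K ≤ b * t / 2) :
    ∃ Z : Fin m → Finset G.edgeSet, (Pairwise fun i j => Disjoint (Z i) (Z j)) ∧
      ∀ j, (Z j).card ≤ K ∧ Connects (Z j) S S' := by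
  classical
  induction m with
  | zero => exact ⟨Fin.elim0, fun i => i.elim0, fun j => j.elim0⟩
  | succ m ih =>
    push_cast at hm
    obtain ⟨Z, hdisj, hZ⟩ := ih (by linarith [Nat.cast_nonneg (α := ℝ) K])
    let U := Finset.univ.biUnion Z
    have hU : U.card ≤ m * K := by
      simpa using Finset.card_biUnion_le_card_mul Finset.univ Z K fun j _ => (hZ j).1
    rify at hU
    obtain ⟨Z₀, hcard, hconn, hZ₀⟩ := hG.exists_connects hdeg hb ht hS hS' hK (U := U)
      (by rw [Set.ncard_coe_finset]; linarith [Nat.cast_nonneg (α := ℝ) K])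
    have hZ₀Z (j) : Disjoint Z₀ (Z j) := (Finset.disjoint_coe.1 hZ₀).mono_right
      (Finset.subset_biUnion_of_mem Z (Finset.mem_univ j))
    refine ⟨Fin.cons Z₀ Z, fun i j hij => ?_, Fin.cases ⟨hcard, hconn⟩ hZ⟩
    cases i using Fin.cases <;> cases j using Fin.cases
    · exact absurd rfl hij
    · exact hZ₀Z _
    · exact (hZ₀Z _).symm
    · exact hdisj fun h => hij (congrArg Fin.succ h)

end Expanders

section Percolation

open Function

variable {V : Type*} {G : SimpleGraph V} {x y : G.edgeSet → Bool} {S S' T : Set V}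

lemma percoGraph_adj {u v : V} :
    (percoGraph G x).Adj u v ↔ ∃ h : G.Adj u v, x ⟨s(u, v), h⟩ = true := by
  rw [percoGraph, SimpleGraph.fromEdgeSet_adj]
  exact ⟨fun h => h.1, fun h => ⟨h, h.1.ne⟩⟩

lemma monotone_percoGraph : Monotone (percoGraph G) := fun _ _ hxy _ _ huv => by
  obtain ⟨h, hx⟩ := percoGraph_adj.1 huv
  exact percoGraph_adj.2 ⟨h, hxy _ hx⟩

lemma percoGraph_le_sup_edge {e : G.edgeSet} {u v : V} (he : e.1 = s(u, v))
    (hxy : ∀ e' ≠ e, x e' = y e') : percoGraph G y ≤ percoGraph G x ⊔ SimpleGraph.edge u v := by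
  intro u' v' hy
  obtain ⟨h, hye⟩ := percoGraph_adj.1 hy
  by_cases hee : ⟨s(u', v'), h⟩ = e
  · refine Or.inr ((SimpleGraph.edge_adj ..).2 ⟨?_, h.ne⟩)
    exact Sym2.eq_iff.1 (he.symm.trans (congrArg Subtype.val hee.symm)) |>.imp
      (fun h => ⟨h.1.symm, h.2.symm⟩) fun h => ⟨h.2.symm, h.1.symm⟩
  · exact Or.inl (percoGraph_adj.2 ⟨h, (hxy _ hee).trans hye⟩)

lemma eq_false_of_mem_cutEdges (hT : T ∈ saturatedSubsets (percoGraph G x) Set.univ)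
    {e : G.edgeSet} (he : e ∈ cutEdges G T) : x e = false := by
  obtain ⟨e, h⟩ := e
  obtain ⟨u, hu, v, hv, rfl⟩ := he
  by_contra hx
  exact hv ((hT.2 (Set.mem_univ u) (Set.mem_univ v)
    (percoGraph_adj.2 ⟨h, by simpa using hx⟩)).1 hu)

lemma percoComp_eq_supp (v : V) :
    percoComp G x v = ((percoGraph G x).connectedComponentMk v).supp := by
  ext u
  exact SimpleGraph.reachable_comm.trans SimpleGraph.ConnectedComponent.eq.symm

section LargestComponent

variable [Finite V]

lemma ncard_supp_le_largestComp (D : (percoGraph G x).ConnectedComponent) :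
    D.supp.ncard ≤ largestComp G x := by
  obtain ⟨v, rfl⟩ := D.exists_rep
  refine (congrArg Set.ncard (percoComp_eq_supp v)).symm.trans_le ?_
  exact le_csSup (Set.finite_range _).bddAbove ⟨v, rfl⟩

lemma exists_ncard_supp_eq_largestComp [Nonempty V] (x : G.edgeSet → Bool) :
    ∃ D : (percoGraph G x).ConnectedComponent, D.supp.ncard = largestComp G x := by
  obtain ⟨v, hv⟩ := (Set.range_nonempty (compSize G x)).csSup_mem (Set.finite_range _)
  exact ⟨_, (congrArg Set.ncard (percoComp_eq_supp v)).symm.trans hv⟩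

lemma monotone_largestComp : Monotone (largestComp G) := fun _ _ hxy =>
  ciSup_mono (Set.finite_range _).bddAbove fun _ =>
    Set.ncard_le_ncard fun _ h => h.mono (monotone_percoGraph hxy)

/-- The event that some connected component contains at least a proportion `c` of the
vertices. -/
def giantEvent (G : SimpleGraph V) (c : ℝ) : Set (G.edgeSet → Bool) :=
  {x | c * Nat.card V ≤ largestComp G x}

lemma isUpperSet_giantEvent (c : ℝ) : IsUpperSet (giantEvent G c) := by
  intro x y hxy (hx : c * Nat.card V ≤ largestComp G x)
  exact hx.trans (Nat.cast_le.2 (monotone_largestComp hxy))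

end LargestComponent

section Sprinkling

variable [Finite V] {b c t : ℝ} {d K m : ℕ}

theorem CheegerGT.bernoulliConfig_real_separated_le (hG : CheegerGT G b) (hdeg : DegreeLE G d)
    (hb : 0 ≤ b) (ht : 0 < t) (hS : t ≤ S.ncard) (hS' : t ≤ S'.ncard)
    (hK : d * Nat.card V < K * (b * t / 2)) (hm : m * K ≤ b * t / 2) (p : I) :
    (bernoulliConfig G.edgeSet p).real
      {y | ∃ T ∈ saturatedSubsets (percoGraph G y) Set.univ, S ⊆ T ∧ Disjoint T S'} ≤
      (1 - (p : ℝ) ^ K) ^ m := by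
  obtain ⟨Z, hdisj, hZ⟩ := hG.exists_pairwise_disjoint_connects hdeg hb ht hS hS' hK hm
  refine (measureReal_mono ?_).trans <|
    (bernoulliConfig_real_forall_exists_false_le p hdisj fun j => (hZ j).1).trans_eq
      (by rw [Fintype.card_fin])
  rintro y ⟨T, hT, hST, hTS'⟩ j
  obtain ⟨e, he, hcut⟩ := (hZ j).2 T hST hTS'
  exact ⟨e, he, eq_false_of_mem_cutEdges hT hcut⟩

-- Otherwise some balanced saturated subset of `C` stays separated from its complement in `C`;
-- take the union over these subsets.
theorem CheegerGT.bernoulliConfig_real_largestComp_sup_lt_le (hG : CheegerGT G b)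
    (hdeg : DegreeLE G d) (hb : 0 ≤ b) (ht : 0 < t) {C : Set V} (hC : 3 * t ≤ C.ncard)
    (hK : d * Nat.card V < K * (b * t / 2)) (hm : m * K ≤ b * t / 2) (p : I)
    (x : G.edgeSet → Bool) :
    (bernoulliConfig G.edgeSet p).real {y | (largestComp G (x ⊔ y) : ℝ) < C.ncard - t} ≤
      (saturatedSubsets (percoGraph G x) C).ncard * (1 - (p : ℝ) ^ K) ^ m := by
  classical
  have := Fintype.ofFinite V
  let F := (saturatedSubsets (percoGraph G x) C).toFinset.filter
    fun S => t ≤ S.ncard ∧ t ≤ (C \ S).ncard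
  have hcover : {y | (largestComp G (x ⊔ y) : ℝ) < C.ncard - t} ⊆ ⋃ S ∈ F,
      {y | ∃ T ∈ saturatedSubsets (percoGraph G y) Set.univ, S ⊆ T ∧ Disjoint T (C \ S)} := by
    intro y hy
    obtain ⟨T, hT, hTC, hCT⟩ := exists_balanced_saturatedSubset (H := percoGraph G (x ⊔ y)) ht hC
      fun D => lt_of_le_of_lt (Nat.cast_le.2 <| (Set.ncard_le_ncard Set.inter_subset_left).trans
        (ncard_supp_le_largestComp D)) hy
    have hTC' : T ∩ C ∈ F := by
      refine Finset.mem_filter.2 ⟨Set.mem_toFinset.2 <| inter_mem_saturatedSubsets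
        (saturatedSubsets_anti (monotone_percoGraph le_sup_left) _ hT) C, hTC, ?_⟩
      rwa [Set.sdiff_inter_self_eq_sdiff]
    exact Set.mem_biUnion hTC' ⟨T, saturatedSubsets_anti (monotone_percoGraph le_sup_right) _ hT,
      Set.inter_subset_left, Set.disjoint_left.2 fun v hv hv' => hv'.2 ⟨hv, hv'.1⟩⟩
  have hcard : F.card ≤ (saturatedSubsets (percoGraph G x) C).ncard := by
    rw [Set.ncard_eq_toFinset_card']
    exact Finset.card_filter_le _ _
  refine (measureReal_mono hcover (measure_ne_top _ _)).trans <|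
    (measureReal_biUnion_finset_le _ _).trans <|
    (Finset.sum_le_card_nsmul _ _ ((1 - (p : ℝ) ^ K) ^ m) fun S hS => ?_).trans ?_
  · obtain ⟨-, hS, hCS⟩ := Finset.mem_filter.1 hS
    exact hG.bernoulliConfig_real_separated_le hdeg hb ht hS hCS hK hm p
  · rw [nsmul_eq_mul]
    gcongr
    exact pow_nonneg (sub_nonneg.2 (pow_le_one₀ p.2.1 p.2.2)) m

lemma DegreeLE.ncard_cutEdges_add_le (hdeg : DegreeLE G d)
    (D : (percoGraph G x).ConnectedComponent) :
    {e ∈ cutEdges G D.supp | y e = true}.ncard + d * D.supp.ncard ≤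
      d * largestComp G (x ⊔ y) := by
  let O : Set V := {v | v ∉ D.supp ∧ ∃ u ∈ D.supp, (percoGraph G (x ⊔ y)).Adj u v}
  have hO : {e ∈ cutEdges G D.supp | y e = true}.ncard ≤ d * O.ncard := by
    refine hdeg.ncard_le_mul ?_
    rintro ⟨e, h⟩ ⟨⟨u, hu, v, hv, rfl⟩, hy⟩
    exact ⟨v, ⟨hv, u, hu, percoGraph_adj.2 ⟨h, by simp [hy]⟩⟩, Sym2.mem_mk_right u v⟩
  obtain ⟨v₀, rfl⟩ := D.exists_rep
  have hle : percoGraph G x ≤ percoGraph G (x ⊔ y) := monotone_percoGraph le_sup_left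
  let D' := (percoGraph G (x ⊔ y)).connectedComponentMk v₀
  have hD {u} (hu : u ∈ ((percoGraph G x).connectedComponentMk v₀).supp) : u ∈ D'.supp :=
    SimpleGraph.ConnectedComponent.sound
      ((SimpleGraph.ConnectedComponent.exact hu).mono hle)
  have hunion : ((percoGraph G x).connectedComponentMk v₀).supp.ncard + O.ncard ≤
      largestComp G (x ⊔ y) := by
    rw [← Set.ncard_union_eq (Set.disjoint_left.2 fun v hv hv' => hv'.1 hv)]
    refine (Set.ncard_le_ncard ?_).trans (ncard_supp_le_largestComp D')
    rintro v (hv | ⟨-, u, hu, huv⟩)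
    · exact hD hv
    · exact (D'.mem_supp_congr_adj huv).1 (hD hu)
  have hmul := Nat.mul_le_mul_left d hunion
  rw [mul_add] at hmul
  exact (Nat.add_le_add_right hO _).trans (by rwa [add_comm])

theorem CheegerGT.sq_mul_bernoulliConfig_real_largestComp_sup_lt_le (hG : CheegerGT G b)
    (hdeg : DegreeLE G d) (hb : 0 < b) (ht : 0 < t) {p : I} (hp : 0 < (p : ℝ)) {k : ℝ}
    (hk : d * k ≤ p * (b * t) / 2) (D : (percoGraph G x).ConnectedComponent)
    (hD : t ≤ D.supp.ncard) (hDc : t ≤ (D.suppᶜ).ncard) :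
    (p * (b * t) / 2) ^ 2 *
      (bernoulliConfig G.edgeSet p).real {y | (largestComp G (x ⊔ y) : ℝ) < D.supp.ncard + k} ≤
      Nat.card G.edgeSet / 4 := by
  classical
  refine (hasBoundedDifferences_ncard_setOf_eq (cutEdges G D.supp) true)
    |>.sq_mul_bernoulliConfig_real_le p (by positivity) fun y hy => ?_
  rw [integral_ncard_setOf_eq, if_pos rfl, abs_sub_comm]
  refine le_trans ?_ (le_abs_self _)
  have hcut := mul_le_mul_of_nonneg_left (hG.mul_le_ncard_cutEdges hb.le ht hD hDc) hp.le
  have hopen := hdeg.ncard_cutEdges_add_le (y := y) D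
  have hy' := mul_le_mul_of_nonneg_left (le_of_lt hy) (Nat.cast_nonneg (α := ℝ) d)
  rify at hopen
  linarith

end Sprinkling

section Saturated

variable [Finite V] {a : ℝ} {d : ℕ}

/-- The least logarithm of the number of saturated subsets, among the vertex sets with at least
`a` elements. It is small as soon as the open edges have a component of size `a`, and it is
`log 2` times the least number of pieces into which they divide such a set. -/
def minLogSaturated (G : SimpleGraph V) (a : ℝ) (x : G.edgeSet → Bool) : ℝ :=
  ⨅ C : {C : Set V // a ≤ C.ncard}, Real.log (saturatedSubsets (percoGraph G x) C).ncard

lemma minLogSaturated_le {C : Set V} (hC : a ≤ C.ncard) :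
    minLogSaturated G a x ≤ Real.log (saturatedSubsets (percoGraph G x) C).ncard :=
  ciInf_le (Set.finite_range _).bddBelow (⟨C, hC⟩ : {C : Set V // a ≤ C.ncard})

lemma log_two_mul_le_one_add_log {n : ℕ} (hn : 1 ≤ n) : Real.log (2 * n) ≤ 1 + Real.log n := by
  rw [Real.log_mul two_ne_zero (by positivity)]
  linarith [Real.log_two_lt_d9]

lemma minLogSaturated_le_one [Nonempty V] (hx : a ≤ largestComp G x) :
    minLogSaturated G a x ≤ 1 := by
  obtain ⟨D, hD⟩ := exists_ncard_supp_eq_largestComp x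
  refine (minLogSaturated_le (hD ▸ hx)).trans ?_
  calc Real.log (saturatedSubsets (percoGraph G x) D.supp).ncard
      ≤ Real.log 2 := Real.log_le_log
        (by exact_mod_cast one_le_ncard_saturatedSubsets _ _)
        (by exact_mod_cast ncard_saturatedSubsets_supp_le D)
    _ ≤ 1 := by linarith [Real.log_two_lt_d9]

lemma hasBoundedDifferences_minLogSaturated [DecidableEq G.edgeSet] (ha : a ≤ Nat.card V) :
    HasBoundedDifferences (minLogSaturated G a) 1 := by
  have : Nonempty {C : Set V // a ≤ C.ncard} := ⟨Set.univ, by rwa [Set.ncard_univ]⟩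
  have hone {x y : G.edgeSet → Bool} {e : G.edgeSet} (h : ∀ e' ≠ e, x e' = y e') :
      minLogSaturated G a x ≤ 1 + minLogSaturated G a y := by
    obtain ⟨⟨u, v⟩, he⟩ := e.1.exists_rep
    rw [← sub_le_iff_le_add']
    refine le_ciInf fun C => sub_le_iff_le_add'.2 ((minLogSaturated_le C.2).trans ?_)
    refine le_trans ?_ (log_two_mul_le_one_add_log (one_le_ncard_saturatedSubsets _ _))
    exact Real.log_le_log (by exact_mod_cast one_le_ncard_saturatedSubsets _ _) <| by
      exact_mod_cast ncard_saturatedSubsets_le_two_mul (percoGraph_le_sup_edge he.symm h) _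
  intro x e z
  exact abs_sub_le_iff.2
    ⟨sub_le_iff_le_add.2 <| hone fun e' he' => update_of_ne he' z x,
      sub_le_iff_le_add.2 <| hone fun e' he' => (update_of_ne he' z x).symm⟩

-- Chebyshev twice: the event of probability `δ` forces the mean below `κ |V| / 2`.
theorem DegreeLE.bernoulliConfig_real_lt_minLogSaturated_le [Nonempty V] (hdeg : DegreeLE G d)
    (ha : a ≤ Nat.card V) (p : I) {δ κ : ℝ} (hκ : 4 ≤ κ * Nat.card V)
    (hd : 4 * d < δ * κ ^ 2 * Nat.card V)
    (hA : δ ≤ (bernoulliConfig G.edgeSet p).real {x | a ≤ largestComp G x}) :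
    (bernoulliConfig G.edgeSet p).real {x | κ * Nat.card V < minLogSaturated G a x} ≤ δ := by
  classical
  set N : ℝ := (Nat.card V : ℝ)
  set μ := bernoulliConfig G.edgeSet p
  set f := minLogSaturated G a
  have hN : 0 < N := Nat.cast_pos.2 Nat.card_pos
  have hf : HasBoundedDifferences f 1 := hasBoundedDifferences_minLogSaturated ha
  have hE : (Nat.card G.edgeSet : ℝ) ≤ d * N :=
    (Nat.cast_le.2 hdeg.card_edgeSet_le).trans_eq (Nat.cast_mul _ _)
  have hdN : 4 * d * N < δ * (κ * N) ^ 2 := by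
    refine (mul_lt_mul_of_pos_right hd hN).trans_eq ?_
    ring
  have hmean : ∫ x, f x ∂μ ≤ κ * N / 2 := by
    by_contra! hlarge
    have h := hf.sq_mul_bernoulliConfig_real_le p (A := {x | a ≤ largestComp G x})
      (l := κ * N / 4) (by linarith) fun x hx => by
        rw [abs_sub_comm]
        refine le_trans ?_ (le_abs_self _)
        linarith [minLogSaturated_le_one (G := G) (x := x) hx]
    have h' := mul_le_mul_of_nonneg_left hA (sq_nonneg (κ * N / 4))
    linarith
  have h := hf.sq_mul_bernoulliConfig_real_le p (A := {x | κ * N < f x}) (l := κ * N / 2)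
    (by linarith) fun x (hx : κ * N < f x) => le_trans (by linarith) (le_abs_self _)
  refine le_of_mul_le_mul_left (h.trans ?_) (by positivity : 0 < (κ * N / 2) ^ 2)
  linarith [Nat.cast_nonneg (α := ℝ) (Nat.card G.edgeSet)]

end Saturated

end Percolation

section SharpThreshold

universe u

variable {V : Type u} [Finite V] {G : SimpleGraph V} {b c η θ : ℝ} {d K m : ℕ}

lemma largestComp_le_ncard_add_one [Nonempty V] (x : G.edgeSet → Bool) :
    largestComp G x ≤ {e | x e = true}.ncard + 1 := by
  obtain ⟨D, hD⟩ := exists_ncard_supp_eq_largestComp x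
  have hopen : (percoGraph G x).edgeSet ⊆ Subtype.val '' {e | x e = true} := by
    rw [percoGraph, SimpleGraph.edgeSet_fromEdgeSet]
    rintro e ⟨⟨he, hx⟩, -⟩
    exact ⟨⟨e, he⟩, hx, rfl⟩
  have hinj : Function.Injective (SimpleGraph.Embedding.induce D.supp).mapEdgeSet :=
    (SimpleGraph.Embedding.induce (G := percoGraph G x) D.supp).mapEdgeSet.injective
  calc largestComp G x = Nat.card D := hD.symm
    _ ≤ Nat.card D.toSimpleGraph.edgeSet + 1 :=
      D.connected_toSimpleGraph.card_vert_le_card_edgeSet_add_one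
    _ ≤ (percoGraph G x).edgeSet.ncard + 1 :=
      Nat.add_le_add_right (Nat.card_le_card_of_injective _ hinj) 1
    _ ≤ {e | x e = true}.ncard + 1 :=
      Nat.add_le_add_right ((Set.ncard_le_ncard hopen).trans (Set.ncard_image_le)) 1

theorem DegreeLE.mul_bernoulliConfig_real_giantEvent_le (hdeg : DegreeLE G d) (hc : 0 ≤ c)
    (hN : 2 ≤ c * Nat.card V) (p : I) :
    c / 2 * (bernoulliConfig G.edgeSet p).real (giantEvent G c) ≤ p * d := by
  have hN' : 0 < (Nat.card V : ℝ) := pos_of_mul_pos_right (by linarith) hc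
  have := (Nat.card_pos_iff.1 (Nat.cast_pos.1 hN')).1
  have h := mul_bernoulliConfig_real_le p true (A := giantEvent G c)
    (l := c / 2 * Nat.card V) (by positivity) fun x (hx : c * Nat.card V ≤ largestComp G x) => by
      have hle := largestComp_le_ncard_add_one x
      rify at hle
      linarith
  refine le_of_mul_le_mul_right (le_trans (by linarith) (h.trans ?_)) hN'
  rw [if_pos rfl, mul_assoc]
  exact mul_le_mul_of_nonneg_left (by exact_mod_cast hdeg.card_edgeSet_le) p.2.1

theorem CheegerGT.mul_bernoulliConfig_real_compl_giantEvent_le [Nonempty V] (hG : CheegerGT G b)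
    (hdeg : DegreeLE G d) (hb : 0 ≤ b) (hη : 0 < η) (hη3 : 3 * η ≤ 1) (hηc : c + η ≤ 1) (p : I) :
    b * η * (bernoulliConfig G.edgeSet p).real (giantEvent G c)ᶜ ≤ (1 - p) * d := by
  have hN : 0 < (Nat.card V : ℝ) := Nat.cast_pos.2 Nat.card_pos
  have h := mul_bernoulliConfig_real_le p false (A := (giantEvent G c)ᶜ)
    (l := b * (η * Nat.card V)) (by positivity) fun x hx => by
      have hx' : largestComp G x < c * Nat.card V := not_le.1 hx
      have hcN := mul_le_mul_of_nonneg_right hηc hN.le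
      obtain ⟨T, hT, hTη, hTcη⟩ := exists_balanced_saturatedSubset (C := Set.univ)
        (H := percoGraph G x) (mul_pos hη hN)
        (by rw [Set.ncard_univ, ← mul_assoc]; exact mul_le_of_le_one_left hN.le hη3) fun D => by
          have hD := ncard_supp_le_largestComp D
          rify at hD
          rw [Set.inter_univ, Set.ncard_univ]
          linarith
      rw [Set.inter_univ] at hTη
      rw [← Set.compl_eq_univ_sdiff] at hTcη
      refine (hG.mul_le_ncard_cutEdges hb (mul_pos hη hN) hTη hTcη).trans ?_
      exact_mod_cast Set.ncard_le_ncard fun e he => eq_false_of_mem_cutEdges hT he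
  refine le_of_mul_le_mul_right (le_trans (by linarith) (h.trans ?_)) hN
  rw [if_neg Bool.false_ne_true, mul_assoc]
  exact mul_le_mul_of_nonneg_left (by exact_mod_cast hdeg.card_edgeSet_le) (sub_nonneg.2 p.2.2)

theorem exists_mem_Icc_probC_giantEvent_eq_half (hb : 0 < b) (d : ℕ) (hc : c ∈ Set.Ioo 0 1) :
    ∃ a a' : ℝ, 0 < a ∧ a ≤ a' ∧ a' < 1 ∧ ∀ {V : Type u} [Finite V] {G : SimpleGraph V},
      CheegerGT G b → DegreeLE G d → 2 ≤ c * Nat.card V →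
      ∃ p ∈ Set.Icc a a', probC p (giantEvent G c) = 1 / 2 := by
  obtain ⟨hc0, hc1⟩ := hc
  obtain ⟨η, hη, hη_lt⟩ : ∃ η : ℝ, 0 < η ∧ η < min (1 / 3) (1 - c) :=
    exists_between (lt_min (by norm_num) (by linarith))
  obtain ⟨hη3, hηc⟩ := lt_min_iff.1 hη_lt
  obtain ⟨a, ha, ha_lt⟩ : ∃ a : ℝ, 0 < a ∧ a < min (1 / 2) (c / (4 * (d + 1))) :=
    exists_between (by positivity)
  obtain ⟨z, hz, hz_lt⟩ : ∃ z : ℝ, 0 < z ∧ z < min (1 / 2) (b * η / (2 * (d + 1))) :=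
    exists_between (by positivity)
  obtain ⟨ha2, had⟩ := lt_min_iff.1 ha_lt
  obtain ⟨hz2, hzd⟩ := lt_min_iff.1 hz_lt
  rw [lt_div_iff₀ (by positivity)] at had hzd
  refine ⟨a, 1 - z, ha, by linarith, by linarith, fun {V _ G} hG hdeg hN => ?_⟩
  have hN' : 0 < (Nat.card V : ℝ) := pos_of_mul_pos_right (by linarith) hc0.le
  have := (Nat.card_pos_iff.1 (Nat.cast_pos.1 hN')).1
  have hlow : probC a (giantEvent G c) ≤ 1 / 2 := by
    let p : I := ⟨a, ha.le, by linarith⟩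
    have h := hdeg.mul_bernoulliConfig_real_giantEvent_le hc0.le hN p
    rw [← probC_eq_bernoulliConfig_real] at h
    exact le_of_mul_le_mul_left (h.trans (by linarith)) (half_pos hc0)
  have hhigh : 1 / 2 ≤ probC (1 - z) (giantEvent G c) := by
    let p : I := ⟨1 - z, by linarith, by linarith⟩
    have h := hG.mul_bernoulliConfig_real_compl_giantEvent_le hdeg hb.le hη (by linarith)
      (by linarith : c + η ≤ 1) p
    rw [probReal_compl_eq_one_sub .of_discrete, ← probC_eq_bernoulliConfig_real] at h
    have hle : (1 - (1 - z)) * (d : ℝ) ≤ b * η * (1 / 2) := by linarith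
    linarith [le_of_mul_le_mul_left (h.trans hle) (mul_pos hb hη)]
  exact intermediate_value_Icc (by linarith) (continuous_probC _).continuousOn ⟨hlow, hhigh⟩

theorem CheegerGT.bernoulliConfig_real_sprinkle_compl_giantEvent_sub_le [Nonempty V]
    (hG : CheegerGT G b) (hdeg : DegreeLE G d) (hb : 0 ≤ b) (hη : 0 < η) (hηc : 3 * η ≤ c)
    (hc : c ≤ 1) (hK : d * Nat.card V < K * (b * (η * Nat.card V) / 2))
    (hm : m * K ≤ b * (η * Nat.card V) / 2) (κ : ℝ) (p r : I) :
    (bernoulliConfig G.edgeSet (sprinkle p r)).real (giantEvent G (c - η))ᶜ ≤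
      (bernoulliConfig G.edgeSet p).real
        {x | κ * Nat.card V < minLogSaturated G (c * Nat.card V) x} +
      Real.exp (κ * Nat.card V) * (1 - (r : ℝ) ^ K) ^ m := by
  have hN : 0 < (Nat.card V : ℝ) := Nat.cast_pos.2 Nat.card_pos
  have hr : 0 ≤ (1 - (r : ℝ) ^ K) ^ m := pow_nonneg (sub_nonneg.2 (pow_le_one₀ r.2.1 r.2.2)) m
  refine bernoulliConfig_sprinkle_real_le p r (by positivity) fun x hx => ?_
  have : Nonempty {C : Set V // c * Nat.card V ≤ C.ncard} :=
    ⟨Set.univ, by rw [Set.ncard_univ]; exact mul_le_of_le_one_left hN.le hc⟩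
  obtain ⟨⟨C, hC⟩, hmin : Real.log (saturatedSubsets (percoGraph G x) C).ncard = _⟩ :=
    exists_eq_ciInf_of_finite (f := fun C : {C : Set V // c * Nat.card V ≤ C.ncard} =>
      Real.log (saturatedSubsets (percoGraph G x) C).ncard)
  have hsat : ((saturatedSubsets (percoGraph G x) C).ncard : ℝ) ≤ Real.exp (κ * Nat.card V) := by
    rw [← Real.log_le_iff_le_exp (by exact_mod_cast one_le_ncard_saturatedSubsets _ _), hmin]
    exact not_lt.1 hx
  refine le_trans (measureReal_mono fun y hy => ?_) <|
    (hG.bernoulliConfig_real_largestComp_sup_lt_le hdeg hb (mul_pos hη hN) (C := C) ?_ hK hm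
      r x).trans (mul_le_mul_of_nonneg_right hsat hr)
  · have hy' : largestComp G (x ⊔ y) < (c - η) * Nat.card V := not_le.1 hy
    rw [Set.mem_ofPred_eq]
    linarith
  · rw [← mul_assoc]
    exact (mul_le_mul_of_nonneg_right hηc hN.le).trans hC

theorem CheegerGT.bernoulliConfig_real_sprinkle_compl_giantEvent_le [Nonempty V]
    (hG : CheegerGT G b) (hdeg : DegreeLE G d) (hb : 0 < b) (hθ : 0 < θ) (hθc : θ ≤ 1 - c)
    (hθη : θ ≤ c - η) {r : I} (hr : 0 < (r : ℝ)) (hη : d * η ≤ r * (b * θ) / 2) (p : I) :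
    (bernoulliConfig G.edgeSet (sprinkle p r)).real (giantEvent G c)ᶜ ≤
      (bernoulliConfig G.edgeSet p).real (giantEvent G (c - η))ᶜ +
        d / (r * (b * θ)) ^ 2 / Nat.card V := by
  set N : ℝ := (Nat.card V : ℝ)
  have hN : 0 < N := Nat.cast_pos.2 Nat.card_pos
  refine bernoulliConfig_sprinkle_real_le p r (by positivity) fun x hx => ?_
  have hx' : (c - η) * N ≤ largestComp G x := not_not.1 hx
  obtain ⟨D, hD⟩ := exists_ncard_supp_eq_largestComp x
  rw [← hD] at hx'
  by_cases hDc : c * N ≤ D.supp.ncard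
  · have hempty : {y | x ⊔ y ∈ (giantEvent G c)ᶜ} = ∅ :=
      Set.eq_empty_of_forall_notMem fun y hy => hy <|
        isUpperSet_giantEvent c (le_sup_left : x ≤ x ⊔ y) (hD ▸ hDc : c * N ≤ largestComp G x)
    rw [hempty, measureReal_empty]
    positivity
  have hcompl : (D.supp.ncard : ℝ) + (D.suppᶜ).ncard = N := by
    rw [← Nat.cast_add, Set.ncard_add_ncard_compl]
  have hθN := mul_le_mul_of_nonneg_right hθc hN.le
  have hgrow := hG.sq_mul_bernoulliConfig_real_largestComp_sup_lt_le hdeg hb (mul_pos hθ hN) hr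
    (k := η * N) (by linarith [mul_le_mul_of_nonneg_right hη hN.le]) D
    ((mul_le_mul_of_nonneg_right hθη hN.le).trans hx') (by linarith)
  have hE : (Nat.card G.edgeSet : ℝ) ≤ d * N :=
    (Nat.cast_le.2 hdeg.card_edgeSet_le).trans_eq (Nat.cast_mul _ _)
  rw [div_div, le_div_iff₀ (by positivity)]
  refine le_of_mul_le_mul_right ?_ hN
  calc _ = 4 * ((r * (b * (θ * N)) / 2) ^ 2 *
        (bernoulliConfig G.edgeSet r).real {y | x ⊔ y ∈ (giantEvent G c)ᶜ}) := by ring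
    _ ≤ 4 * (Nat.card G.edgeSet / 4) := by
        refine mul_le_mul_of_nonneg_left (le_trans (mul_le_mul_of_nonneg_left
          (measureReal_mono fun y hy => ?_) (sq_nonneg _)) hgrow) (by norm_num)
        have hy' : largestComp G (x ⊔ y) < c * N := not_le.1 hy
        rw [Set.mem_ofPred_eq]
        linarith
    _ ≤ d * N := by linarith

lemma exp_mul_pow_floor_le {ρ γ N : ℝ} (hρ : 0 ≤ ρ) (hρ1 : ρ ≤ 1) :
    Real.exp (ρ * γ / 2 * N) * (1 - ρ) ^ ⌊γ * N⌋₊ ≤ Real.exp (1 - ρ * γ / 2 * N) := by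
  have hfloor := mul_le_mul_of_nonneg_left (Nat.lt_floor_add_one (γ * N)).le hρ
  calc Real.exp (ρ * γ / 2 * N) * (1 - ρ) ^ ⌊γ * N⌋₊
      ≤ Real.exp (ρ * γ / 2 * N) * Real.exp (-ρ) ^ ⌊γ * N⌋₊ := by
        gcongr
        exact Real.one_sub_le_exp_neg ρ
    _ ≤ Real.exp (1 - ρ * γ / 2 * N) := by
        rw [← Real.exp_nat_mul, ← Real.exp_add, Real.exp_le_exp]
        linarith

theorem eventually_compl_giantEvent_sub_le (hb : 0 < b) (d : ℕ) (hη : 0 < η) (hηc : 3 * η ≤ c)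
    (hc : c ≤ 1) {r : I} (hr : 0 < (r : ℝ)) {δ : ℝ} (hδ : 0 < δ) :
    ∀ᶠ n in atTop, ∀ {V : Type u} [Finite V] {G : SimpleGraph V}, Nat.card V = n →
      CheegerGT G b → DegreeLE G d → ∀ p, δ ≤ (bernoulliConfig G.edgeSet p).real (giantEvent G c) →
      (bernoulliConfig G.edgeSet (sprinkle p r)).real (giantEvent G (c - η))ᶜ ≤ 2 * δ := by
  obtain ⟨K, hK⟩ := exists_nat_gt (2 * d / (b * η))
  have hKpos : 0 < (K : ℝ) := lt_of_le_of_lt (by positivity) hK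
  rw [div_lt_iff₀ (by positivity)] at hK
  let γ := b * η / (2 * K)
  let κ := (r : ℝ) ^ K * γ / 2
  have hκ : 0 < κ := by positivity
  have hγK : γ * K = b * η / 2 := by
    simp only [γ]
    field_simp
  have hlin {a : ℝ} (ha : 0 < a) : Tendsto (fun n : ℕ => a * n) atTop atTop :=
    tendsto_natCast_atTop_atTop.const_mul_atTop ha
  have hexp : Tendsto (fun n : ℕ => Real.exp (1 - κ * n)) atTop (nhds 0) :=
    Real.tendsto_exp_atBot.comp (tendsto_atBot_add_const_left _ 1 (tendsto_neg_atTop_atBot.comp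
      (hlin hκ)))
  filter_upwards [eventually_gt_atTop 0, (hlin hκ).eventually_ge_atTop 4,
    (hlin (by positivity : 0 < δ * κ ^ 2)).eventually_gt_atTop (4 * d),
    hexp.eventually_le_const hδ] with n hn hκN hdN hexpN V _ G hcard hG hdeg p hp
  subst hcard
  have := (Nat.card_pos_iff.1 hn).1
  set N : ℝ := (Nat.card V : ℝ)
  have hN : 0 < N := Nat.cast_pos.2 hn
  have hm : ⌊γ * N⌋₊ ≤ γ * N := Nat.floor_le (by positivity)
  have herror : Real.exp (κ * N) * (1 - (r : ℝ) ^ K) ^ ⌊γ * N⌋₊ ≤ Real.exp (1 - κ * N) :=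
    exp_mul_pow_floor_le (pow_nonneg r.2.1 K) (pow_le_one₀ r.2.1 r.2.2)
  have hrefine := hdeg.bernoulliConfig_real_lt_minLogSaturated_le
    (mul_le_of_le_one_left hN.le hc) p hκN hdN hp
  have hsprinkle := hG.bernoulliConfig_real_sprinkle_compl_giantEvent_sub_le hdeg hb.le hη hηc hc
    (K := K) (m := ⌊γ * N⌋₊) (by linarith [mul_lt_mul_of_pos_right hK hN])
    (by linarith [mul_le_mul_of_nonneg_right hm hKpos.le, congrArg (· * N) hγK]) κ p r
  linarith

theorem eventually_compl_giantEvent_le (hb : 0 < b) (d : ℕ) (hc : c ∈ Set.Ioo 0 1) {ε δ : ℝ}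
    (hε : 0 < ε) (hδ : 0 < δ) :
    ∀ᶠ n in atTop, ∀ {V : Type u} [Finite V] {G : SimpleGraph V}, Nat.card V = n →
      CheegerGT G b → DegreeLE G d → ∀ p q : I, (p : ℝ) + ε ≤ q →
      δ ≤ (bernoulliConfig G.edgeSet p).real (giantEvent G c) →
      (bernoulliConfig G.edgeSet q).real (giantEvent G c)ᶜ ≤ δ := by
  obtain ⟨hc0, hc1⟩ := hc
  obtain ⟨r₀, hr₀, hr₀_lt⟩ : ∃ r : ℝ, 0 < r ∧ r < min (ε / 2) 1 :=
    exists_between (by positivity)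
  obtain ⟨hrε, hr1⟩ := lt_min_iff.1 hr₀_lt
  let r : I := ⟨r₀, hr₀.le, hr1.le⟩
  let θ := min (c / 2) (1 - c)
  have hθ : 0 < θ := lt_min (by positivity) (by linarith)
  obtain ⟨η, hη, hη_lt⟩ : ∃ η : ℝ, 0 < η ∧ η < min (c / 3) (r₀ * (b * θ) / (2 * (d + 1))) :=
    exists_between (by positivity)
  obtain ⟨hηc, hηd⟩ := lt_min_iff.1 hη_lt
  rw [lt_div_iff₀ (by positivity)] at hηd
  have hgap : Tendsto (fun n : ℕ => d / ((r : ℝ) * (b * θ)) ^ 2 / n) atTop (nhds 0) :=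
    tendsto_const_div_atTop_nhds_zero_nat _
  filter_upwards [eventually_gt_atTop 0, hgap.eventually_le_const (by positivity : 0 < δ / 3),
    eventually_compl_giantEvent_sub_le hb d hη (by linarith : 3 * η ≤ c) hc1.le (r := r) hr₀
      (by positivity : 0 < δ / 3)] with n hn hgapn hsub V _ G hcard hG hdeg p q hpq hp
  subst hcard
  have := (Nat.card_pos_iff.1 hn).1
  have halmost := hsub rfl hG hdeg p (by linarith)
  have hfull := hG.bernoulliConfig_real_sprinkle_compl_giantEvent_le hdeg hb hθ
    (min_le_right _ _) (by linarith [min_le_left (c / 2) (1 - c)] : θ ≤ c - η) (r := r) hr₀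
    (by linarith [mul_comm (d : ℝ) η] : d * η ≤ r₀ * (b * θ) / 2) (sprinkle p r)
  have hle : sprinkle (sprinkle p r) r ≤ q := by
    refine le_trans (b := (p : ℝ) + ε) ?_ hpq
    linarith [coe_sprinkle_le_add (sprinkle p r) r, coe_sprinkle_le_add p r]
  have hmono := bernoulliConfig_real_mono hle (isUpperSet_giantEvent (G := G) c)
  rw [probReal_compl_eq_one_sub .of_discrete] at hfull ⊢
  linarith

theorem eventually_one_sub_le_probC_giantEvent (hb : 0 < b) (d : ℕ) (hc : c ∈ Set.Ioo 0 1)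
    {ε δ : ℝ} (hε : 0 < ε) (hδ : 0 < δ) :
    ∀ᶠ n in atTop, ∀ {V : Type u} [Finite V] {G : SimpleGraph V}, Nat.card V = n →
      CheegerGT G b → DegreeLE G d → ∀ p ∈ I, ∀ q ∈ I, p + ε ≤ q →
      δ ≤ probC p (giantEvent G c) → 1 - δ ≤ probC q (giantEvent G c) := by
  filter_upwards [eventually_compl_giantEvent_le hb d hc hε hδ]
    with n h V _ G hcard hG hdeg p hp q hq hpq hδp
  have hcompl := h hcard hG hdeg ⟨p, hp⟩ ⟨q, hq⟩ hpq (by rwa [← probC_eq_bernoulliConfig_real])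
  rw [probReal_compl_eq_one_sub .of_discrete, ← probC_eq_bernoulliConfig_real] at hcompl
  linarith

section ExpanderSeq

variable {E : ExpanderSeq b d} {p q : ℕ → ℝ} {ε δ : ℝ}

theorem tendsto_probC_giantEvent_one (hb : 0 < b) (hc : c ∈ Set.Ioo 0 1) (hε : 0 < ε)
    (hp : ∀ n, p n ∈ I) (hq : ∀ n, q n ∈ I) (hpq : ∀ n, p n + ε ≤ q n) (hδ : 0 < δ)
    (h : ∀ᶠ n in atTop, δ ≤ probC (p n) (giantEvent (E.G n) c)) :
    Tendsto (fun n => probC (q n) (giantEvent (E.G n) c)) atTop (nhds 1) := by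
  have := E.finV
  refine tendsto_order.2 ⟨fun l hl => ?_, fun l hl => .of_forall fun n => ?_⟩
  · have hsharp := E.card_tendsto.eventually <| eventually_one_sub_le_probC_giantEvent hb d hc hε
      (lt_min hδ (half_pos (sub_pos.2 hl)))
    filter_upwards [hsharp, h] with n hn hδn
    linarith [hn rfl (E.cheeger_gt n) (E.degree_le n) _ (hp n) _ (hq n) (hpq n)
      ((min_le_left _ _).trans hδn), min_le_right δ ((1 - l) / 2)]
  · refine lt_of_le_of_lt ?_ hl
    rw [probC_eq_bernoulliConfig_real ⟨q n, hq n⟩]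
    exact measureReal_le_one

theorem tendsto_probC_giantEvent_zero (hb : 0 < b) (hc : c ∈ Set.Ioo 0 1) (hε : 0 < ε)
    (hp : ∀ n, p n ∈ I) (hq : ∀ n, q n ∈ I) (hpq : ∀ n, p n + ε ≤ q n) (hδ : δ < 1)
    (h : ∀ᶠ n in atTop, probC (q n) (giantEvent (E.G n) c) ≤ δ) :
    Tendsto (fun n => probC (p n) (giantEvent (E.G n) c)) atTop (nhds 0) := by
  have := E.finV
  refine tendsto_order.2 ⟨fun l hl => .of_forall fun n => ?_, fun l hl => ?_⟩
  · refine lt_of_lt_of_le hl ?_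
    rw [probC_eq_bernoulliConfig_real ⟨p n, hp n⟩]
    exact measureReal_nonneg
  · have hsharp := E.card_tendsto.eventually <| eventually_one_sub_le_probC_giantEvent hb d hc hε
      (half_pos (lt_min (sub_pos.2 hδ) hl))
    filter_upwards [hsharp, h] with n hn hδn
    by_contra! hl
    linarith [hn rfl (E.cheeger_gt n) (E.degree_le n) _ (hp n) _ (hq n) (hpq n)
      (by linarith [min_le_right (1 - δ) l]), min_le_left (1 - δ) l]

end ExpanderSeq

end SharpThreshold

/-- sharp threshold for the appearance of a giant component of proportion `c`
in a `(b,d)`-expander. -/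
theorem stmt0 (b : ℝ) (hb : 0 < b) (d : ℕ) (E : ExpanderSeq b d)
    (c : ℝ) (hc : c ∈ Set.Ioo (0 : ℝ) 1) :
    ∃ pstar : ℕ → ℝ, ∃ a a' : ℝ, 0 < a ∧ a' < 1 ∧ (∀ n, pstar n ∈ Set.Icc a a') ∧
      ∀ ε : ℝ, 0 < ε →
        (∀ p : ℕ → ℝ, (∀ n, p n ∈ Set.Icc (0 : ℝ) 1) → (∀ n, pstar n + ε ≤ p n) →
          Tendsto (fun n => probC (p n)
              {x : (E.G n).edgeSet → Bool |
                c * (Nat.card (E.V n) : ℝ) ≤ (largestComp (E.G n) x : ℝ)})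
            atTop (nhds 1)) ∧
        (∀ p : ℕ → ℝ, (∀ n, p n ∈ Set.Icc (0 : ℝ) 1) → (∀ n, p n ≤ pstar n - ε) →
          Tendsto (fun n => probC (p n)
              {x : (E.G n).edgeSet → Bool |
                c * (Nat.card (E.V n) : ℝ) ≤ (largestComp (E.G n) x : ℝ)})
            atTop (nhds 0)) := by
  have := E.finV
  obtain ⟨a, a', ha, haa', ha', hhalf⟩ := exists_mem_Icc_probC_giantEvent_eq_half hb d hc
  have hpstar (n) : ∃ p ∈ Set.Icc a a',
      2 ≤ c * Nat.card (E.V n) → probC p (giantEvent (E.G n) c) = 1 / 2 := by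
    by_cases hn : 2 ≤ c * Nat.card (E.V n)
    · obtain ⟨p, hp, hp_half⟩ := hhalf (E.cheeger_gt n) (E.degree_le n) hn
      exact ⟨p, hp, fun _ => hp_half⟩
    · exact ⟨a, ⟨le_rfl, haa'⟩, fun h => absurd h hn⟩
  choose pstar hmem hpstar using hpstar
  have hlarge : ∀ᶠ n in atTop, 2 ≤ c * Nat.card (E.V n) :=
    ((tendsto_natCast_atTop_atTop.comp E.card_tendsto).const_mul_atTop hc.1).eventually_ge_atTop 2
  have hI (n) : pstar n ∈ I := ⟨ha.le.trans (hmem n).1, (hmem n).2.trans ha'.le⟩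
  refine ⟨pstar, a, a', ha, ha', hmem, fun ε hε => ⟨fun p hp hge => ?_, fun p hp hle => ?_⟩⟩
  · exact tendsto_probC_giantEvent_one hb hc hε hI hp hge one_half_pos
      (hlarge.mono fun n hn => (hpstar n hn).ge)
  · exact tendsto_probC_giantEvent_zero hb hc hε hp hI (fun n => le_sub_iff_add_le.1 (hle n))
      one_half_lt_one (hlarge.mono fun n hn => (hpstar n hn).le)
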